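/- arXiv:1909.00547 — 6 statements merged into one kernel-verified Lean document; each statement's English description precedes it below -/
import Mathlib

section
/- For every n ≥ 1 and every natural number t, the following identity of ℂ-linear endomorphisms of the polynomial ring ℂ[x_1,…,x_n] holds: ∏_{j=0}^{t} (E + (n+j)·id) = Σ_{u ∈ ℕ^n, u_1+⋯+u_n = t+1} ((t+1)!/(u_1!⋯u_n!)) · ∂^u ∘ μ_{x^u}, where E = Σ_{i=1}^{n} μ_{x_i} ∘ ∂_i is the Euler operator, ∂^u = ∂_1^{u_1} ∘ ⋯ ∘ ∂_n^{u_n}, μ_p denotes the operator of multiplication by the polynomial p, and x^u = x_1^{u_1}⋯x_n^{u_n}. (The factors E + (n+j)·id on the left commute with each other, so the order of the product is irrelevant.) -/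
open MvPolynomial

/-- The multiplication operator `μ_p` on `ℂ[x_1,…,x_n]`. -/
noncomputable def mulOp (n : ℕ) (p : MvPolynomial (Fin n) ℂ) :
    Module.End ℂ (MvPolynomial (Fin n) ℂ) :=
  LinearMap.mulLeft ℂ p

/-- The `i`-th formal partial derivative `∂_i` as a `ℂ`-linear endomorphism. -/
noncomputable def pdOp (n : ℕ) (i : Fin n) :
    Module.End ℂ (MvPolynomial (Fin n) ℂ) :=
  (pderiv i).toLinearMap

/-- `∂^u = ∂_1^{u_1} ∘ ⋯ ∘ ∂_n^{u_n}`. -/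
noncomputable def partialPow (n : ℕ) (u : Fin n → ℕ) :
    Module.End ℂ (MvPolynomial (Fin n) ℂ) :=
  (List.ofFn fun i => pdOp n i ^ u i).prod

/-- The Euler operator `E = Σ_i μ_{x_i} ∘ ∂_i`. -/
noncomputable def eulerOp (n : ℕ) : Module.End ℂ (MvPolynomial (Fin n) ℂ) :=
  ∑ i : Fin n, mulOp n (X i) * pdOp n i

theorem aux_choose_sum (n m : ℕ) (hn : 1 ≤ n) (a : Fin n → ℕ) :
    ∑ u ∈ Finset.Nat.antidiagonalTuple n m, ∏ i, (a i + u i).choose (u i) =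
      (∑ i, a i + n - 1 + m).choose m := by
  have key : ∏ i, (PowerSeries.mk 1 : PowerSeries ℤ) ^ (a i + 1) =
      (PowerSeries.mk 1 : PowerSeries ℤ) ^ ((∑ i, a i + n - 1) + 1) := by
    rw [Finset.prod_pow_eq_pow_sum]
    congr 1
    rw [Finset.sum_add_distrib]
    simp
    omega
  have h2 := congrArg (PowerSeries.coeff m) key
  simp_rw [PowerSeries.mk_one_pow_eq_mk_choose_add] at h2
  rw [PowerSeries.coeff_prod] at h2
  simp only [PowerSeries.coeff_mk] at h2
  rw [← Nat.choose_symm_add]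
  have h3 : ∑ u ∈ Finset.Nat.antidiagonalTuple n m, ∏ i, (a i + u i).choose (u i) =
      ∑ l ∈ Finset.univ.finsuppAntidiag m, ∏ i, (a i + l i).choose (a i) := by
    refine Finset.sum_bij' (fun u _ => Finsupp.equivFunOnFinite.symm u) (fun l _ => (l : Fin n → ℕ))
      ?_ ?_ ?_ ?_ ?_
    · intro u hu
      simpa [Finset.Nat.mem_antidiagonalTuple] using hu
    · intro u hu
      simpa [Finset.Nat.mem_antidiagonalTuple] using hu
    · intro u hu
      rfl
    · intro u hu
      ext; rfl
    · intro u hu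
      refine Finset.prod_congr rfl fun i _ => ?_
      exact Nat.choose_symm_add.symm
  rw [h3]
  exact_mod_cast h2

theorem aux_asc_sum (n m : ℕ) (hn : 1 ≤ n) (a : Fin n → ℕ) :
    ∑ u ∈ Finset.Nat.antidiagonalTuple n m,
      Nat.multinomial Finset.univ u * ∏ i, (a i + 1).ascFactorial (u i) =
      (∑ i, a i + n).ascFactorial m := by
  have e : ∑ i, a i + n = (∑ i, a i + n - 1) + 1 := by omega
  rw [e, Nat.ascFactorial_eq_factorial_mul_choose, ← aux_choose_sum n m hn a, Finset.mul_sum]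
  refine Finset.sum_congr rfl fun u hu => ?_
  rw [Finset.Nat.mem_antidiagonalTuple] at hu
  have := Nat.multinomial_spec Finset.univ u
  rw [hu] at this
  simp_rw [Nat.ascFactorial_eq_factorial_mul_choose, Finset.prod_mul_distrib]
  rw [← this]
  ring

theorem aux_pd (n : ℕ) (i : Fin n) (k : ℕ) (a : Fin n →₀ ℕ) (c : ℂ) :
    (pdOp n i ^ k) (monomial (a + Finsupp.single i k) c) =
      monomial a (c * ((a i + 1).ascFactorial k : ℕ)) := by
  induction k generalizing c with
  | zero => simp
  | succ k ih =>
    have h1 : pdOp n i (monomial (a + Finsupp.single i (k + 1)) c) =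
        monomial (a + Finsupp.single i k) (c * ((a i + 1 + k : ℕ) : ℂ)) := by
      show pderiv i _ = _
      rw [pderiv_monomial]
      congr 2
      · ext j
        by_cases h : j = i
        · subst h; simp
        · simp [Finsupp.single_apply, Ne.symm h]
      · simp
        ring
    rw [pow_succ, Module.End.mul_apply, h1, ih, Nat.ascFactorial_succ]
    congr 1
    push_cast
    ring

theorem aux_list (n : ℕ) (u : Fin n → ℕ) (l : List (Fin n)) (hl : l.Nodup)
    (a : Fin n →₀ ℕ) (c : ℂ) :
    ((l.map fun i => pdOp n i ^ u i).prod)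
      (monomial (a + (l.map fun i => Finsupp.single i (u i)).sum) c) =
      monomial a (c * (((l.map fun i => (a i + 1).ascFactorial (u i)).prod : ℕ) : ℂ)) := by
  induction l generalizing a c with
  | nil => simp
  | cons i l ih =>
    rw [List.nodup_cons] at hl
    simp only [List.map_cons, List.prod_cons, List.sum_cons]
    rw [Module.End.mul_apply, ← add_assoc, ih hl.2, aux_pd]
    have : (l.map fun j => ((a + Finsupp.single i (u i)) j + 1).ascFactorial (u j)) =
        l.map fun j => (a j + 1).ascFactorial (u j) := by
      refine List.map_congr_left fun j hj => ?_
      have : i ≠ j := fun h => hl.1 (h ▸ hj)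
      simp [Finsupp.single_apply, this]
    rw [this]
    congr 1
    push_cast
    ring

theorem aux_term (n : ℕ) (u : Fin n → ℕ) (a : Fin n →₀ ℕ) :
    (partialPow n u * mulOp n (∏ i : Fin n, X i ^ u i)) (monomial a 1) =
      ((∏ i, (a i + 1).ascFactorial (u i) : ℕ) : ℂ) • monomial a (1 : ℂ) := by
  have h := aux_list n u (List.finRange n) (List.nodup_finRange n) a 1
  have hx : mulOp n (∏ i : Fin n, X i ^ u i) (monomial a 1) =
      monomial (a + ((List.finRange n).map fun i => Finsupp.single i (u i)).sum) 1 := by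
    show (∏ i : Fin n, X i ^ u i) * _ = _
    rw [← List.ofFn_eq_map, List.sum_ofFn]
    simp_rw [X_pow_eq_monomial]
    rw [← monomial_sum_one, monomial_mul, add_comm, one_mul]
  rw [Module.End.mul_apply, hx, partialPow, List.ofFn_eq_map, h, ← List.ofFn_eq_map,
    List.prod_ofFn, smul_monomial, smul_eq_mul, mul_one, one_mul]

theorem aux_euler (n : ℕ) (a : Fin n →₀ ℕ) :
    eulerOp n (monomial a 1) = ((∑ i, a i : ℕ) : ℂ) • monomial a (1 : ℂ) := by
  have : ∀ i, (mulOp n (X i) * pdOp n i) (monomial a 1) = a i • monomial a (1 : ℂ) :=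
    fun i => X_mul_pderiv_monomial
  rw [eulerOp, LinearMap.sum_apply]
  simp_rw [this]
  rw [← Finset.sum_smul, Nat.cast_smul_eq_nsmul]

theorem aux_lhs (n m : ℕ) (a : Fin n →₀ ℕ) :
    (((List.range m).map fun j =>
        eulerOp n + ((n + j : ℕ) : ℂ) • (1 : Module.End ℂ (MvPolynomial (Fin n) ℂ))).prod)
      (monomial a 1) = (((∑ i, a i + n).ascFactorial m : ℕ) : ℂ) • monomial a (1 : ℂ) := by
  induction m with
  | zero => simp
  | succ m ih =>
    rw [List.range_succ, List.map_append, List.prod_append, Module.End.mul_apply]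
    simp only [List.map_cons, List.map_nil, List.prod_singleton]
    rw [LinearMap.add_apply, aux_euler, LinearMap.smul_apply, Module.End.one_apply, ← add_smul,
      map_smul, ih, smul_smul, Nat.ascFactorial_succ]
    congr 1
    push_cast
    ring

/-- `∏_{j=0}^{t} (E + (n+j)·id)
      = Σ_{u ∈ ℕ^n, u_1+⋯+u_n = t+1} ((t+1)!/(u_1!⋯u_n!)) · ∂^u ∘ μ_{x^u}`. -/
theorem euler_product_formula (n t : ℕ) (hn : 1 ≤ n) :
    ((List.range (t + 1)).map fun j =>
        eulerOp n + ((n + j : ℕ) : ℂ) • (1 : Module.End ℂ (MvPolynomial (Fin n) ℂ))).prod =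
      ∑ u ∈ Finset.Nat.antidiagonalTuple n (t + 1),
        (Nat.multinomial Finset.univ u : ℂ) •
          (partialPow n u * mulOp n (∏ i : Fin n, X i ^ u i)) := by
  refine MvPolynomial.linearMap_ext fun a => LinearMap.ext_ring ?_
  rw [LinearMap.comp_apply, LinearMap.comp_apply, aux_lhs, LinearMap.sum_apply,
    ← aux_asc_sum n (t + 1) hn a, Nat.cast_sum, Finset.sum_smul]
  refine Finset.sum_congr rfl fun u _ => ?_
  rw [LinearMap.smul_apply, aux_term, smul_smul, Nat.cast_mul]
end

section
/- Let n, d ≥ 1 and let l_1,…,l_d ∈ ℂ[x_1,…,x_n] be nonzero homogeneous linear forms (not necessarily distinct) whose only common zero in ℂ^n is the origin. Call a linear subspace X ⊆ ℂ^n an edge if X = ⋂_{j∈J} ker(l_j) for some subset J ⊆ {1,…,d}, and for an edge X set J(X) = { j : X ⊆ ker(l_j) }. Let Γ be the ideal of ℂ[x_1,…,x_n] generated by the polynomials ∏_{k ∉ J(X)} l_k, where X ranges over all edges with dim_ℂ X = 1, and let 𝔪 = (x_1,…,x_n). Then there exists a positive integer k such that 𝔪^k ⊆ Γ. -/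
open MvPolynomial


lemma exists_linear_of_isHomogeneous_one {n : ℕ} (f : MvPolynomial (Fin n) ℂ)
    (hf : f.IsHomogeneous 1) :
    ∃ φ : (Fin n → ℂ) →ₗ[ℂ] ℂ, ∀ q, eval q f = φ q := by
  have h : f ∈ homogeneousSubmodule (Fin n) ℂ 1 := hf
  rw [homogeneousSubmodule_one_eq_span_X] at h
  induction h using Submodule.span_induction with
  | mem x hx =>
    obtain ⟨i, rfl⟩ := hx
    exact ⟨LinearMap.proj i, fun q => by simp⟩
  | zero => exact ⟨0, fun q => by simp⟩
  | add x y hx hy ihx ihy =>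
    rw [← homogeneousSubmodule_one_eq_span_X] at hx hy
    obtain ⟨a, ha⟩ := ihx hx
    obtain ⟨b, hb⟩ := ihy hy
    exact ⟨a + b, fun q => by simp [ha, hb]⟩
  | smul c x hx ih =>
    rw [← homogeneousSubmodule_one_eq_span_X] at hx
    obtain ⟨a, ha⟩ := ih hx
    exact ⟨c • a, fun q => by simp [ha]⟩

open scoped Classical in
lemma exists_line_edge {n d : ℕ} (φ : Fin d → (Fin n → ℂ) →ₗ[ℂ] ℂ)
    (hess : ∀ p, (∀ j, φ j p = 0) → p = 0) (p : Fin n → ℂ) (hp : p ≠ 0) :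
    ∃ J : Finset (Fin d), (∀ j, φ j p = 0 → j ∈ J) ∧
      Module.finrank ℂ (⨅ j ∈ J, LinearMap.ker (φ j) : Submodule ℂ (Fin n → ℂ)) = 1 := by
  let P : Finset (Fin d) → Prop := fun T => ∃ v, v ≠ 0 ∧ ∀ j ∈ T, φ j v = 0
  have h0 : P (Finset.univ.filter fun j => φ j p = 0) := ⟨p, hp, by simp⟩
  obtain ⟨J, hJ, hmax⟩ := Finite.exists_le_maximal h0
  refine ⟨J, fun j hj => hJ (by simp [hj]), ?_⟩
  obtain ⟨v, hv, hvJ⟩ := hmax.prop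
  obtain ⟨m, hm⟩ : ∃ m, φ m v ≠ 0 := by
    by_contra! h
    exact hv (hess v h)
  rw [finrank_eq_one_iff']
  refine ⟨⟨v, by simpa using hvJ⟩, by simpa using hv, ?_⟩
  rintro ⟨w, hw⟩
  simp only [Submodule.mem_iInf, LinearMap.mem_ker] at hw
  refine ⟨φ m w / φ m v, ?_⟩
  ext1
  change (φ m w / φ m v) • v = w
  by_contra hne
  have hins : P (insert m J) := by
    refine ⟨(φ m w / φ m v) • v - w, sub_ne_zero.mpr hne, ?_⟩
    intro j hj
    rcases Finset.mem_insert.mp hj with rfl | hj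
    · simp [hm]
    · simp [hvJ j hj, hw j hj]
  have := hmax.le_of_ge hins (Finset.subset_insert m J)
  exact hm (hvJ m (this (Finset.mem_insert_self m J)))

open scoped Classical in
/-- For a central essential arrangement `l₁⋯l_d`, some power of the maximal ideal
`𝔪 = (x₁,…,x_n)` is contained in the ideal `Γ` generated by the products
`∏_{k ∉ J(X)} l_k` over all one-dimensional edges `X`. -/
theorem maximal_ideal_power_le_edge_ideal (n d : ℕ) (hn : 1 ≤ n) (hd : 1 ≤ d)
    (l : Fin d → MvPolynomial (Fin n) ℂ)
    (hl0 : ∀ j, l j ≠ 0)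
    (hlh : ∀ j, (l j).IsHomogeneous 1)
    (hess : ∀ p : Fin n → ℂ, (∀ j, eval p (l j) = 0) → p = 0) :
    ∃ k : ℕ, 0 < k ∧
      (Ideal.span (Set.range fun i : Fin n => (X i : MvPolynomial (Fin n) ℂ))) ^ k ≤
        Ideal.span {f : MvPolynomial (Fin n) ℂ |
          ∃ (Y : Submodule ℂ (Fin n → ℂ)) (J : Finset (Fin d)),
            (Y : Set (Fin n → ℂ)) = ⋂ j ∈ J, {q : Fin n → ℂ | eval q (l j) = 0} ∧
            Module.finrank ℂ Y = 1 ∧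
            f = ∏ m ∈ Finset.univ.filter
                (fun m : Fin d => ¬ (Y : Set (Fin n → ℂ)) ⊆ {q : Fin n → ℂ | eval q (l m) = 0}),
              l m} := by
  choose φ hφ using fun j => exists_linear_of_isHomogeneous_one (l j) (hlh j)
  set Γ := Ideal.span {f : MvPolynomial (Fin n) ℂ |
          ∃ (Y : Submodule ℂ (Fin n → ℂ)) (J : Finset (Fin d)),
            (Y : Set (Fin n → ℂ)) = ⋂ j ∈ J, {q : Fin n → ℂ | eval q (l j) = 0} ∧
            Module.finrank ℂ Y = 1 ∧
            f = ∏ m ∈ Finset.univ.filter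
                (fun m : Fin d => ¬ (Y : Set (Fin n → ℂ)) ⊆ {q : Fin n → ℂ | eval q (l m) = 0}),
              l m} with hΓ
  have hz : ∀ p ∈ zeroLocus ℂ Γ, p = 0 := by
    intro p hp
    by_contra hp0
    obtain ⟨J, hJ, hrank⟩ := exists_line_edge φ
      (fun p h => hess p fun j => by rw [hφ, h]) p hp0
    rw [hΓ, zeroLocus_span] at hp
    have := hp _ ⟨_, J, ?_, hrank, rfl⟩
    · rw [map_prod, Finset.prod_eq_zero_iff] at this
      obtain ⟨m, hm, hm0⟩ := this
      have hm1 := (Finset.mem_filter.mp hm).2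
      apply hm1
      intro q hq
      have hmJ : m ∈ J := hJ m (by rw [← hφ]; simpa [aeval_eq_eval] using hm0)
      simp only [SetLike.mem_coe, Submodule.mem_iInf, LinearMap.mem_ker] at hq
      simpa [hφ] using hq m hmJ
    · ext q
      simp [hφ]
  have hle : Ideal.span (Set.range fun i : Fin n => (X i : MvPolynomial (Fin n) ℂ)) ≤
      Γ.radical := by
    rw [← vanishingIdeal_zeroLocus_eq_radical (K := ℂ), Ideal.span_le]
    rintro _ ⟨i, rfl⟩
    rw [SetLike.mem_coe, mem_vanishingIdeal_iff]
    intro x hx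
    simp [hz x hx]
  obtain ⟨k, hk⟩ := Ideal.exists_pow_le_of_le_radical_of_fg hle
    (IsNoetherian.noetherian _)
  exact ⟨k + 1, k.succ_pos, (Ideal.pow_le_pow_right k.le_succ).trans hk⟩
end

section
/- Let n, d ≥ 1 and let l_1,…,l_d ∈ ℂ[x_1,…,x_n] be nonzero homogeneous linear forms (not necessarily distinct) whose only common zero in ℂ^n is the origin. Call a linear subspace X ⊆ ℂ^n an edge if X = ⋂_{j∈J} ker(l_j) for some subset J ⊆ {1,…,d}, and for an edge X set J(X) = { j : X ⊆ ker(l_j) }. Then for every point p ∈ ℂ^n with p ≠ 0 there exists an edge X with dim_ℂ X = 1 such that the polynomial ∏_{k ∉ J(X)} l_k does not vanish at p. Equivalently, the common zero locus of the polynomials ∏_{k ∉ J(X)} l_k, as X ranges over all one-dimensional edges, is exactly {0}. -/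
open MvPolynomial

theorem aux_lin (n : ℕ) (q : MvPolynomial (Fin n) ℂ) (h : q.IsHomogeneous 1) :
    ∃ f : (Fin n → ℂ) →ₗ[ℂ] ℂ, ∀ p, f p = eval p q := by
  have hq : q ∈ Submodule.span ℂ (Set.range (X : Fin n → MvPolynomial (Fin n) ℂ)) := by
    rw [← homogeneousSubmodule_one_eq_span_X]
    exact h
  clear h
  induction hq using Submodule.span_induction with
  | mem x hx =>
    obtain ⟨i, rfl⟩ := hx
    exact ⟨LinearMap.proj i, fun p => by simp⟩
  | zero => exact ⟨0, fun p => by simp⟩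
  | add x y _ _ hx hy =>
    obtain ⟨f, hf⟩ := hx
    obtain ⟨g, hg⟩ := hy
    exact ⟨f + g, fun p => by simp [hf, hg]⟩
  | smul a x _ hx =>
    obtain ⟨f, hf⟩ := hx
    exact ⟨a • f, fun p => by simp [hf, smul_eval]⟩

open scoped Classical in
theorem onedim_edge_product_nonvanishing (n d : ℕ) (hn : 1 ≤ n) (hd : 1 ≤ d)
    (l : Fin d → MvPolynomial (Fin n) ℂ)
    (hl0 : ∀ j, l j ≠ 0)
    (hlh : ∀ j, (l j).IsHomogeneous 1)
    (hess : ∀ p : Fin n → ℂ, (∀ j, eval p (l j) = 0) → p = 0)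
    (p : Fin n → ℂ) (hp : p ≠ 0) :
    ∃ (X : Submodule ℂ (Fin n → ℂ)) (J : Finset (Fin d)),
      (X : Set (Fin n → ℂ)) = ⋂ j ∈ J, {q : Fin n → ℂ | eval q (l j) = 0} ∧
      Module.finrank ℂ X = 1 ∧
      eval p (∏ k ∈ Finset.univ.filter
          (fun k : Fin d => ¬ (X : Set (Fin n → ℂ)) ⊆ {q : Fin n → ℂ | eval q (l k) = 0}),
        l k) ≠ 0 := by
  choose f hf using fun j => aux_lin n (l j) (hlh j)
  let J0 : Finset (Fin d) := Finset.univ.filter fun k => f k p = 0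
  let S : Finset (Finset (Fin d)) := Finset.univ.filter fun J =>
    J0 ⊆ J ∧ ∃ q : Fin n → ℂ, q ≠ 0 ∧ ∀ j ∈ J, f j q = 0
  have hS : S.Nonempty := ⟨J0, by
    simp only [S, Finset.mem_filter, Finset.mem_univ, true_and]
    exact ⟨subset_rfl, p, hp, fun j hj => by simpa [J0] using hj⟩⟩
  obtain ⟨J, hJS, hmax⟩ := S.exists_max_image Finset.card hS
  obtain ⟨hJ0, q, hq, hqJ⟩ : J0 ⊆ J ∧ ∃ q : Fin n → ℂ, q ≠ 0 ∧ ∀ j ∈ J, f j q = 0 := by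
    simpa [S] using hJS
  have hk : ∃ k, f k q ≠ 0 := by
    by_contra! h
    exact hq (hess q fun j => by rw [← hf]; exact h j)
  obtain ⟨k, hk⟩ := hk
  have hkJ : k ∉ J := fun h => hk (hqJ k h)
  have hinj : ∀ r, (∀ j ∈ J, f j r = 0) → f k r = 0 → r = 0 := by
    intro r hr hkr
    by_contra hr0
    have hm : insert k J ∈ S := by
      simp only [S, Finset.mem_filter, Finset.mem_univ, true_and]
      refine ⟨hJ0.trans (Finset.subset_insert _ _), r, hr0, ?_⟩
      intro j hj
      rcases Finset.mem_insert.mp hj with rfl | hj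
      · exact hkr
      · exact hr j hj
    have := hmax _ hm
    rw [Finset.card_insert_of_notMem hkJ] at this
    omega
  let X : Submodule ℂ (Fin n → ℂ) := ⨅ j ∈ J, LinearMap.ker (f j)
  have hX : ∀ r, r ∈ X ↔ ∀ j ∈ J, f j r = 0 := by
    intro r
    simp [X, Submodule.mem_iInf]
  refine ⟨X, J, ?_, ?_, ?_⟩
  · ext r
    simp only [SetLike.mem_coe, hX, Set.mem_iInter, Set.mem_setOf_eq, hf]
  · refine finrank_eq_one_iff_of_nonzero' (⟨q, (hX q).2 hqJ⟩ : X)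
      (by simpa [Subtype.ext_iff] using hq) |>.2 ?_
    rintro ⟨r, hr⟩
    refine ⟨f k r / f k q, Subtype.ext ?_⟩
    have := hinj (r - (f k r / f k q) • q) (fun j hj => by
      simp [(hX r).1 hr j hj, hqJ j hj]) (by simp [hk])
    exact (sub_eq_zero.mp this).symm
  · rw [map_prod, Finset.prod_ne_zero_iff]
    intro m hm h0
    refine (Finset.mem_filter.mp hm).2 fun r hr => ?_
    have : m ∈ J := hJ0 (by simp [J0, hf, h0])
    have := (hX r).1 hr m this
    rwa [hf] at this
end

section
/- (Trace of adjoint actions for a preferred basis of logarithmic derivations; algebraic form of Castro-Jiménez–Ucha's formula.) Let n ≥ 1 and let f ∈ ℂ[x_1,…,x_n] be nonzero. Let δ_1,…,δ_n be ℂ-linear derivations of ℂ[x_1,…,x_n] such that: (a) δ_i(f) = 0 for all i ≤ n−1; (b) δ_n(f) = f; (c) the determinant of the n×n matrix H with entries H_{k,i} = δ_i(x_k) equals f. Suppose c : {1,…,n}^3 → ℂ[x_1,…,x_n] satisfies, for all i, j, the commutator identity [δ_i, δ_j] = Σ_{k=1}^{n} c(k,i,j) · δ_k (where [·,·] is the commutator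 of derivations and the sum is an ℂ[x]-linear combination). Then for every i ≤ n−1 one has Σ_{j=1}^{n} c(j,i,j) = − Σ_{k=1}^{n} ∂_k(δ_i(x_k)), and for i = n one has Σ_{j=1}^{n} c(j,n,j) = − Σ_{k=1}^{n} ∂_k(δ_n(x_k)) + 1. -/
open MvPolynomial

theorem aux_leibniz_prod {R A ι : Type*} [CommRing R] [CommRing A] [Algebra R A] [DecidableEq ι]
    (D : Derivation R A A) (s : Finset ι) (g : ι → A) :
    D (∏ i ∈ s, g i) = ∑ i ∈ s, ∏ j ∈ s, if j = i then D (g j) else g j := by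
  induction s using Finset.induction_on with
  | empty => simp
  | insert a s ha ih =>
    rw [Finset.prod_insert ha, D.leibniz, ih, Finset.sum_insert ha, Finset.prod_insert ha]
    have h1 : ∏ j ∈ s, (if j = a then D (g j) else g j) = ∏ j ∈ s, g j :=
      Finset.prod_congr rfl fun j hj => if_neg (by rintro rfl; exact ha hj)
    have h2 : ∀ i ∈ s, ∏ j ∈ insert a s, (if j = i then D (g j) else g j)
        = g a * ∏ j ∈ s, (if j = i then D (g j) else g j) := fun i hi => by
      rw [Finset.prod_insert ha, if_neg (by rintro rfl; exact ha hi)]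
    rw [Finset.sum_congr rfl h2, h1, ← Finset.mul_sum]
    simp only [if_true, smul_eq_mul]
    ring

theorem aux_jacobi {R A ι : Type*} [CommRing R] [CommRing A] [Algebra R A] [DecidableEq ι]
    [Fintype ι] (D : Derivation R A A) (M : Matrix ι ι A) :
    D M.det = (M.adjugate * M.map D).trace := by
  have h : (M.adjugate * M.map D).trace = ∑ i, (M.updateCol i fun k => D (M k i)).det := by
    unfold Matrix.trace
    refine Finset.sum_congr rfl fun i _ => ?_
    rw [← Matrix.cramer_apply, Matrix.cramer_eq_adjugate_mulVec]
    rfl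
  rw [h, Matrix.det_apply']
  simp only [Matrix.det_apply']
  rw [Finset.sum_comm, map_sum]
  refine Finset.sum_congr rfl fun σ _ => ?_
  rw [D.leibniz, aux_leibniz_prod]
  simp [Matrix.updateCol_apply, Finset.mul_sum]
  refine Finset.sum_congr rfl fun i _ => ?_
  congr 1
  refine Finset.prod_congr rfl fun j _ => ?_
  split_ifs with hji
  · rw [hji]
  · rfl

theorem aux_sum_apply {R A ι : Type*} [CommRing R] [CommRing A] [Algebra R A]
    (s : Finset ι) (D : ι → Derivation R A A) (a : A) :
    (∑ i ∈ s, D i) a = ∑ i ∈ s, D i a := by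
  classical
  induction s using Finset.induction_on with
  | empty => simp
  | insert b s hb ih => rw [Finset.sum_insert hb, Finset.sum_insert hb, Derivation.add_apply, ih]

theorem aux_main (n : ℕ)
    (f : MvPolynomial (Fin n) ℂ)
    (δ : Fin n → Derivation ℂ (MvPolynomial (Fin n) ℂ) (MvPolynomial (Fin n) ℂ))
    (hdet : (Matrix.of fun k i : Fin n => δ i (X k)).det = f)
    (c : Fin n → Fin n → Fin n → MvPolynomial (Fin n) ℂ)
    (hc : ∀ i j : Fin n, ⁅δ i, δ j⁆ = ∑ k : Fin n, c k i j • δ k) (i : Fin n) :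
    δ i f = f * (∑ k : Fin n, pderiv k (δ i (X k)) + ∑ j : Fin n, c j i j) := by
  set H : Matrix (Fin n) (Fin n) (MvPolynomial (Fin n) ℂ) :=
    Matrix.of fun k i : Fin n => δ i (X k) with hH
  let J : Matrix (Fin n) (Fin n) (MvPolynomial (Fin n) ℂ) :=
    Matrix.of fun m k => pderiv k (δ i (X m))
  let C : Matrix (Fin n) (Fin n) (MvPolynomial (Fin n) ℂ) := Matrix.of fun k j => c k i j
  have hexp : ∀ j, δ j = ∑ k, δ j (X k) • pderiv k := fun j => by
    apply MvPolynomial.derivation_ext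
    intro m
    simp [aux_sum_apply, pderiv_X, Pi.single_apply]
  have key : H.map (δ i) = J * H + H * C := by
    ext1 m j
    have h1 := congrArg (fun D => D (X m)) (hc i j)
    have h2 := congrArg (fun D => D (δ i (X m))) (hexp j)
    simp only [Derivation.commutator_apply, aux_sum_apply,
      Derivation.smul_apply, smul_eq_mul] at h1 h2
    simp only [Matrix.map_apply, Matrix.add_apply, Matrix.mul_apply, H, J, C, Matrix.of_apply]
    rw [sub_eq_iff_eq_add, h2] at h1
    rw [h1, add_comm]
    congr 1 <;> exact Finset.sum_congr rfl fun _ _ => mul_comm _ _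
  rw [← hdet, aux_jacobi, key, Matrix.mul_add, Matrix.trace_add, ← Matrix.mul_assoc,
    Matrix.trace_mul_comm, ← Matrix.mul_assoc, ← Matrix.mul_assoc, Matrix.mul_adjugate,
    Matrix.adjugate_mul, Matrix.smul_mul, Matrix.smul_mul, Matrix.one_mul, Matrix.one_mul,
    Matrix.trace_smul, Matrix.trace_smul, mul_add]
  rfl

open MvPolynomial

/-- Trace of adjoint actions for a preferred basis of logarithmic derivations
(algebraic form of the Castro-Jiménez–Ucha formula). -/
theorem trace_adjoint_preferred_basis (n : ℕ) (hn : 1 ≤ n)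
    (f : MvPolynomial (Fin n) ℂ) (hf : f ≠ 0)
    (δ : Fin n → Derivation ℂ (MvPolynomial (Fin n) ℂ) (MvPolynomial (Fin n) ℂ))
    (hkill : ∀ i : Fin n, (i : ℕ) + 1 < n → δ i f = 0)
    (heuler : ∀ i : Fin n, (i : ℕ) + 1 = n → δ i f = f)
    (hdet : (Matrix.of fun k i : Fin n => δ i (X k)).det = f)
    (c : Fin n → Fin n → Fin n → MvPolynomial (Fin n) ℂ)
    (hc : ∀ i j : Fin n, ⁅δ i, δ j⁆ = ∑ k : Fin n, c k i j • δ k) :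
    (∀ i : Fin n, (i : ℕ) + 1 < n →
        ∑ j : Fin n, c j i j = -∑ k : Fin n, pderiv k (δ i (X k))) ∧
    (∀ i : Fin n, (i : ℕ) + 1 = n →
        ∑ j : Fin n, c j i j = -∑ k : Fin n, pderiv k (δ i (X k)) + 1) := by
  have h := aux_main n f δ hdet c hc
  refine ⟨fun i hi => ?_, fun i hi => ?_⟩
  · have h1 := h i
    rw [hkill i hi] at h1
    have h2 := (mul_eq_zero.mp h1.symm).resolve_left hf
    linear_combination h2
  · have h1 := h i
    rw [heuler i hi] at h1
    have h2 := mul_left_cancel₀ hf ((mul_one f).trans h1)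
    linear_combination -h2
end

section
/- Let q, r ≥ 1, let v : {1,…,q} → ℕ with v(t) ≥ 1 for all t, let J_1,…,J_r be subsets of {1,…,q}, and let d_1,…,d_r and m_1,…,m_r be positive integers such that: (i) for every t, v(t) = Σ_{k : t ∈ J_k} d_k; (ii) for every k and every j ∈ J_k, v(j) = m_k. Let d'_1,…,d'_r be natural numbers with d'_k ≤ d_k for all k, let ρ be an integer, and let T ⊆ {1,…,q}. In the polynomial ring ℚ[s_1,…,s_r], set P = Σ_{k=1}^{r} (d_k·|J_k∩T|)·s_k + ρ + Σ_{k=1}^{r} d'_k·|J_k∩T|, and let φ be the ℚ-algebra endomorphism of ℚ[s_1,…,s_r] determined by φ(s_k) = −s_k − 1/m_k − 2d'_k/d_k − (d_k − d'_k)/d_k. Then φ(P) = −( P + |T| + Σ_{k=1}^{r} d_k·|J_k∩T| − 2ρ − Σ_{k=1}^{r} d'_k·|J_k∩T| ). -/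
open MvPolynomial

/-- The identity `φ(P^g_{f'F,X}) = −(P^g_{f'F,X} + d_{X,red} + d_X − 2r(X) − d'_X)`
governing the symmetry of Bernstein–Sato ideals for unmixed factorizations. -/
theorem symmetry_involution_identity (q r : ℕ) (hq : 1 ≤ q) (hr : 1 ≤ r)
    (v : Fin q → ℕ) (hv : ∀ t, 1 ≤ v t)
    (J : Fin r → Finset (Fin q))
    (d m : Fin r → ℕ) (hd : ∀ k, 0 < d k) (hm : ∀ k, 0 < m k)
    (hvd : ∀ t : Fin q, v t = ∑ k ∈ Finset.univ.filter (fun k : Fin r => t ∈ J k), d k)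
    (hvm : ∀ k : Fin r, ∀ j ∈ J k, v j = m k)
    (d' : Fin r → ℕ) (hd' : ∀ k, d' k ≤ d k)
    (ρ : ℤ) (T : Finset (Fin q))
    (P : MvPolynomial (Fin r) ℚ)
    (hP : P = (∑ k : Fin r, C ((d k : ℚ) * ((J k ∩ T).card : ℚ)) * X k) +
        C ((ρ : ℚ) + ∑ k : Fin r, (d' k : ℚ) * ((J k ∩ T).card : ℚ)))
    (φ : MvPolynomial (Fin r) ℚ →ₐ[ℚ] MvPolynomial (Fin r) ℚ)
    (hφ : φ = aeval fun k : Fin r =>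
        -X k - C ((1 : ℚ) / (m k : ℚ)) - C (2 * (d' k : ℚ) / (d k : ℚ))
          - C (((d k : ℚ) - (d' k : ℚ)) / (d k : ℚ))) :
    φ P = -(P + C ((T.card : ℚ) + (∑ k : Fin r, (d k : ℚ) * ((J k ∩ T).card : ℚ))
        - 2 * (ρ : ℚ) - ∑ k : Fin r, (d' k : ℚ) * ((J k ∩ T).card : ℚ))) := by
  have key : ∑ k : Fin r, (d k : ℚ) * ((J k ∩ T).card : ℚ) * (1 / (m k : ℚ)) = (T.card : ℚ) := by
    have h1 : ∀ k : Fin r, (d k : ℚ) * ((J k ∩ T).card : ℚ) * (1 / (m k : ℚ))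
        = ∑ t ∈ T, if t ∈ J k then (d k : ℚ) / (v t : ℚ) else 0 := by
      intro k
      rw [← Finset.sum_filter]
      have h2 : T.filter (fun t => t ∈ J k) = J k ∩ T := by
        ext t; simp [and_comm]
      rw [h2, Finset.sum_congr rfl (g := fun _ => (d k : ℚ) / (m k : ℚ))]
      · rw [Finset.sum_const, nsmul_eq_mul]; ring
      · intro t ht
        rw [hvm k t (Finset.mem_inter.mp ht).1]
    rw [Finset.sum_congr rfl (fun k _ => h1 k), Finset.sum_comm]
    rw [Finset.sum_congr rfl (g := fun _ => (1 : ℚ))]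
    · simp
    · intro t _
      rw [← Finset.sum_filter, ← Finset.sum_div]
      have h3 : (v t : ℚ) ≠ 0 := by
        have := hv t
        positivity
      have h4 : (v t : ℚ) = ∑ k ∈ Finset.univ.filter (fun k : Fin r => t ∈ J k), (d k : ℚ) := by
        exact_mod_cast hvd t
      rw [← h4, div_self h3]
  have hterm : ∀ k : Fin r, C ((d k : ℚ) * ((J k ∩ T).card : ℚ)) *
      (-X k - C ((1 : ℚ) / (m k : ℚ)) - C (2 * (d' k : ℚ) / (d k : ℚ))
          - C (((d k : ℚ) - (d' k : ℚ)) / (d k : ℚ)))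
      = -(C ((d k : ℚ) * ((J k ∩ T).card : ℚ)) * X k)
        - C ((d k : ℚ) * ((J k ∩ T).card : ℚ) * (1 / (m k : ℚ)))
        - C ((d' k : ℚ) * ((J k ∩ T).card : ℚ))
        - (C ((d k : ℚ) * ((J k ∩ T).card : ℚ)) : MvPolynomial (Fin r) ℚ) := by
    intro k
    have hk : (d k : ℚ) ≠ 0 := by
      have := hd k
      positivity
    have e : (d k : ℚ) * ((J k ∩ T).card : ℚ) * (2 * (d' k : ℚ) / (d k : ℚ))
        + (d k : ℚ) * ((J k ∩ T).card : ℚ) * (((d k : ℚ) - (d' k : ℚ)) / (d k : ℚ))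
        = (d' k : ℚ) * ((J k ∩ T).card : ℚ) + (d k : ℚ) * ((J k ∩ T).card : ℚ) := by
      field_simp
      ring
    have e' := congrArg (C (σ := Fin r)) e
    rw [C_add, C_add, C_mul (a := (d k : ℚ) * ((J k ∩ T).card : ℚ)),
      C_mul (a := (d k : ℚ) * ((J k ∩ T).card : ℚ))] at e'
    rw [C_mul (a := (d k : ℚ) * ((J k ∩ T).card : ℚ)) (a' := 1 / (m k : ℚ))]
    linear_combination -e'
  have hφP : φ P = (∑ k : Fin r, C ((d k : ℚ) * ((J k ∩ T).card : ℚ)) *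
      (-X k - C ((1 : ℚ) / (m k : ℚ)) - C (2 * (d' k : ℚ) / (d k : ℚ))
          - C (((d k : ℚ) - (d' k : ℚ)) / (d k : ℚ)))) +
        C ((ρ : ℚ) + ∑ k : Fin r, (d' k : ℚ) * ((J k ∩ T).card : ℚ)) := by
    rw [hP, hφ]
    simp only [map_add, map_sum, _root_.map_mul, aeval_X, aeval_C, algebraMap_eq]
  rw [hφP, Finset.sum_congr rfl (fun k _ => hterm k), hP, ← key]
  simp only [Finset.sum_sub_distrib, Finset.sum_neg_distrib, ← map_sum]
  simp only [C_add, C_sub, two_mul]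
  ring
end

section
/- (Right constant term of a product with a first-order operator.) Let A be a commutative ring and R = A[x_1,…,x_n] the polynomial ring. For a_1,…,a_n ∈ R let δ = Σ_i μ_{a_i} ∘ ∂_i (an A-linear endomorphism of R), and let c ∈ R. Suppose P is an A-linear endomorphism of R of the form P = Σ_{u} ∂^u ∘ μ_{P_u}, where u ranges over a finite set of multi-indices in ℕ^n, P_u ∈ R, and P_0 denotes the coefficient at u = 0 (the right constant term). Then there exist a finite family of polynomials Q_u ∈ R such that P ∘ (δ − μ_c) = Σ_u ∂^u ∘ μ_{Q_u} and the right constant term is Q_0 = −(Σ_{i=1}^{n} ∂_i(a_i))·P_0 − Σ_{i=1}^{n} a_i·∂_i(P_0) − c·P_0. -/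
open MvPolynomial

namespace RightConstantTerm

variable (A : Type*) [CommRing A] (n : ℕ)

/-- The multiplication operator `μ_p` on `A[x_1,…,x_n]`. -/
noncomputable def mulOp (p : MvPolynomial (Fin n) A) :
    Module.End A (MvPolynomial (Fin n) A) :=
  LinearMap.mulLeft A p

/-- The `i`-th formal partial derivative `∂_i` as an `A`-linear endomorphism. -/
noncomputable def pdOp (i : Fin n) :
    Module.End A (MvPolynomial (Fin n) A) :=
  (pderiv i).toLinearMap

/-- `∂^u = ∂_1^{u_1} ∘ ⋯ ∘ ∂_n^{u_n}`. -/
noncomputable def partialPow (u : Fin n → ℕ) :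
    Module.End A (MvPolynomial (Fin n) A) :=
  (List.ofFn fun i => pdOp A n i ^ u i).prod

theorem pdOp_commute (i j : Fin n) : Commute (pdOp A n i) (pdOp A n j) := by
  have h : ⁅(pderiv i : Derivation A (MvPolynomial (Fin n) A) (MvPolynomial (Fin n) A)),
      (pderiv j : Derivation A (MvPolynomial (Fin n) A) (MvPolynomial (Fin n) A))⁆ = 0 := by
    apply MvPolynomial.derivation_ext
    intro k
    rw [Derivation.commutator_apply]
    simp [pderiv_X, Pi.single_apply, apply_ite]
  apply LinearMap.ext
  intro p
  have := congrArg (fun D => D p) h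
  rw [Derivation.commutator_apply] at this
  exact sub_eq_zero.mp this

theorem prod_aux {M : Type*} [Monoid M] : ∀ (m : ℕ) (f : Fin m → M)
    (_ : ∀ i j, Commute (f i) (f j)) (u : Fin m → ℕ) (i : Fin m),
    (List.ofFn fun j => f j ^ (u + Pi.single i 1 : Fin m → ℕ) j).prod
      = (List.ofFn fun j => f j ^ u j).prod * f i := by
  intro m
  induction m with
  | zero => intro f hf u i; exact i.elim0
  | succ m ih =>
    intro f hf u i
    rw [List.ofFn_succ, List.ofFn_succ, List.prod_cons, List.prod_cons]
    refine Fin.cases ?_ (fun i => ?_) i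
    · have hc : Commute (f 0) (List.ofFn fun j : Fin m => f j.succ ^ u j.succ).prod := by
        apply Commute.list_prod_right
        intro x hx
        obtain ⟨j, rfl⟩ := List.mem_ofFn.mp hx
        exact (hf 0 j.succ).pow_right _
      have e : ∀ j : Fin m, (u + Pi.single (0 : Fin (m+1)) 1 : Fin (m+1) → ℕ) j.succ = u j.succ := by
        intro j; simp
      simp only [e]
      simp only [Pi.add_apply, Pi.single_eq_same, pow_succ]
      rw [mul_assoc, hc.eq, mul_assoc]
    · have e : ∀ j : Fin m, (u + Pi.single i.succ 1 : Fin (m+1) → ℕ) j.succ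
          = ((fun k : Fin m => u k.succ) + Pi.single i 1 : Fin m → ℕ) j := by
        intro j; simp [Pi.single_apply]
      simp only [e]
      rw [ih (fun k => f k.succ) (fun _ _ => hf _ _) (fun k => u k.succ) i]
      simp [mul_assoc]

theorem partialPow_add (u : Fin n → ℕ) (i : Fin n) :
    partialPow A n (u + Pi.single i 1) = partialPow A n u * pdOp A n i :=
  prod_aux n (pdOp A n) (pdOp_commute A n) u i

theorem mul_pd (p : MvPolynomial (Fin n) A) (i : Fin n) :
    mulOp A n p * pdOp A n i = pdOp A n i * mulOp A n p - mulOp A n (pderiv i p) := by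
  apply LinearMap.ext
  intro q
  simp [mulOp, pdOp]
  ring

/-- the sum map as additive hom -/
noncomputable def mulHom : MvPolynomial (Fin n) A →+ Module.End A (MvPolynomial (Fin n) A) where
  toFun := mulOp A n
  map_zero' := by simp [mulOp]
  map_add' p q := by
    apply LinearMap.ext
    intro r
    simp [mulOp, add_mul]

noncomputable def nf : ((Fin n → ℕ) →₀ MvPolynomial (Fin n) A) →+
    Module.End A (MvPolynomial (Fin n) A) :=
  Finsupp.liftAddHom fun u => (AddMonoidHom.mulLeft (partialPow A n u)).comp (mulHom A n)

theorem nf_single (u : Fin n → ℕ) (p : MvPolynomial (Fin n) A) :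
    nf A n (Finsupp.single u p) = partialPow A n u * mulOp A n p := by
  unfold nf
  rw [Finsupp.liftAddHom_apply_single]
  rfl

/-- Right constant term of a product with a first-order operator: if `P` has right
normal form `Σ_u ∂^u ∘ μ_{P_u}` then `P ∘ (δ − μ_c)` has a right normal form whose
constant term is `−(Σ_i ∂_i(a_i))·P_0 − Σ_i a_i·∂_i(P_0) − c·P_0`. -/
theorem right_constant_term_mul_first_order
    (a : Fin n → MvPolynomial (Fin n) A) (c : MvPolynomial (Fin n) A)
    (δ : Module.End A (MvPolynomial (Fin n) A))
    (hδ : δ = ∑ i : Fin n, mulOp A n (a i) * pdOp A n i)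
    (s : Finset (Fin n → ℕ)) (Pcoef : (Fin n → ℕ) → MvPolynomial (Fin n) A)
    (hPsupp : ∀ u ∉ s, Pcoef u = 0)
    (P : Module.End A (MvPolynomial (Fin n) A))
    (hP : P = ∑ u ∈ s, partialPow A n u * mulOp A n (Pcoef u)) :
    ∃ (t : Finset (Fin n → ℕ)) (Qcoef : (Fin n → ℕ) → MvPolynomial (Fin n) A),
      (∀ u ∉ t, Qcoef u = 0) ∧
      P * (δ - mulOp A n c) = ∑ u ∈ t, partialPow A n u * mulOp A n (Qcoef u) ∧
      Qcoef 0 = -(∑ i : Fin n, pderiv i (a i)) * Pcoef 0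
          - (∑ i : Fin n, a i * pderiv i (Pcoef 0)) - c * Pcoef 0 := by
  classical
  let f : (Fin n → ℕ) →₀ MvPolynomial (Fin n) A := ∑ u ∈ s,
    ((∑ i, Finsupp.single (u + Pi.single i 1) (Pcoef u * a i))
      - Finsupp.single u ((∑ i, pderiv i (Pcoef u * a i)) + Pcoef u * c))
  refine ⟨f.support, f, fun u hu => Finsupp.notMem_support_iff.mp hu, ?_, ?_⟩
  · have h1 : ∑ u ∈ f.support, partialPow A n u * mulOp A n (f u) = nf A n f := rfl
    have hmul : ∀ p q, mulOp A n (p * q) = mulOp A n p * mulOp A n q := fun p q => by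
      apply LinearMap.ext
      intro r
      simp [mulOp, mul_assoc]
    have hadd : ∀ p q, mulOp A n (p + q) = mulOp A n p + mulOp A n q := (mulHom A n).map_add
    have hsum : ∀ g : Fin n → MvPolynomial (Fin n) A,
        mulOp A n (∑ i, g i) = ∑ i, mulOp A n (g i) := fun g => map_sum (mulHom A n) g _
    rw [h1, hP, Finset.sum_mul, map_sum]
    refine Finset.sum_congr rfl fun u _ => ?_
    rw [map_sub, map_sum]
    simp only [nf_single, partialPow_add]
    rw [hadd, hsum, hδ, mul_assoc, mul_sub, Finset.mul_sum, ← hmul]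
    simp only [← mul_assoc, ← hmul]
    simp only [mul_pd, mul_assoc, Finset.sum_sub_distrib, mul_sub, mul_add, Finset.mul_sum]
    abel
  · have hne : ∀ (u : Fin n → ℕ) (i : Fin n), u + Pi.single i 1 ≠ 0 := fun u i h => by
      have := congrFun h i
      simp at this
    have : f 0 = -((∑ i, pderiv i (Pcoef 0 * a i)) + Pcoef 0 * c) := by
      simp only [f, Finsupp.finsetSum_apply, Finsupp.sub_apply, Finsupp.single_apply, hne,
        if_false, Finset.sum_const_zero, zero_sub]
      rw [Finset.sum_eq_single 0]
      · simp
      · intro u _ hu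
        simp [hu]
      · intro h0
        simp [hPsupp 0 h0]
    rw [this]
    simp only [Derivation.leibniz, smul_eq_mul, Finset.sum_add_distrib, ← Finset.mul_sum]
    ring

end RightConstantTerm
end
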